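/- Let f ∈ A₁(c), set s = f′(c₂), and let M be a real number such that f(x) ≤ M for all x ∈ (−1,1). Then for every x ∈ (c₂,1): f(x) ≤ c₄ + s·(x−c₂) + (M − c₄ − s·(1−c₂))·(x−c₂)²/(1−c₂)². -/

import Mathlib

open Set Complex

noncomputable section

/-- The doubly-slit plane `ℂ(J)` for `J ⊆ ℝ`. -/
def CSlit (J : Set ℝ) : Set ℂ := {z : ℂ | z.im ≠ 0 ∨ z.re ∈ J}

/-- `ℂ₁ = ℂ((−1,1))`. -/
def C1 : Set ℂ := CSlit (Set.Ioo (-1 : ℝ) 1)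

/-- The class `A₁(c)` of normalized Herglotz functions. -/
structure MemA1 (c₁ c₂ c₃ c₄ : ℝ) (f : ℂ → ℂ) : Prop where
  holo : DifferentiableOn ℂ f C1
  maps : Set.MapsTo f C1 C1
  symm : ∀ z ∈ C1, f (starRingEnd ℂ z) = starRingEnd ℂ (f z)
  upper : ∀ z ∈ C1, 0 < z.im → 0 ≤ (f z).im
  lower : ∀ z ∈ C1, z.im < 0 → (f z).im ≤ 0
  val1 : f (c₁ : ℂ) = (c₃ : ℂ)
  val2 : f (c₂ : ℂ) = (c₄ : ℂ)

/-!
A function `f` mapping the upper half-plane into its closure contracts the hyperbolic metric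
(Schwarz–Pick). Letting two points of the half-plane tend vertically to real points `x` and `c` at
which `f` is real and differentiable, the inequality becomes the nonnegativity of the `2 × 2`
Loewner determinant, `(f x - f c)² ≤ (x - c)² f'(x) f'(c)`. By AM-GM,
`2 (f x - f c) ≤ (x - c) (f'(x) + f'(c))` for `c < x`, which says precisely that the divided
difference `f[c, c, x]` has nonnegative derivative in `x`. Comparing its value at `x` with its
limiting bound at the right endpoint gives the theorem.
-/

section SchwarzPick

open Metric
open UpperHalfPlane (upperHalfPlaneSet)
open scoped ComplexConjugate Topology

/-- The Cayley transform centred at `w`, which maps the upper half-plane onto the unit disc and `w`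
to `0`. The modulus of `cayley w z` is the pseudohyperbolic distance from `z` to `w`. -/
def cayley (w z : ℂ) : ℂ := (z - w) / (z - conj w)

/-- The inverse of `cayley w`, which maps the unit disc onto the upper half-plane. -/
def cayleyInv (w ζ : ℂ) : ℂ := (w - conj w * ζ) / (1 - ζ)

variable {z w ζ : ℂ} {F : ℂ → ℂ}

lemma norm_sub_conj_sq (z w : ℂ) : ‖z - conj w‖ ^ 2 = ‖z - w‖ ^ 2 + 4 * (z.im * w.im) := by
  simp only [Complex.sq_norm, normSq_apply, sub_re, sub_im, conj_re, conj_im]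
  ring

lemma sub_conj_ne_zero (hz : 0 < z.im) (hw : 0 < w.im) : z - conj w ≠ 0 := by
  intro h
  have him : z.im + w.im = 0 := by simpa using congrArg im h
  linarith

lemma one_sub_ne_zero_of_mem_ball (hζ : ζ ∈ ball (0 : ℂ) 1) : 1 - ζ ≠ 0 := by
  intro h
  simp [← sub_eq_zero.1 h] at hζ

@[simp]
lemma cayley_self (w : ℂ) : cayley w w = 0 := by
  simp [cayley]

@[simp]
lemma cayleyInv_zero (w : ℂ) : cayleyInv w 0 = w := by
  simp [cayleyInv]

lemma norm_cayley_sq (z w : ℂ) :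
    ‖cayley w z‖ ^ 2 = ‖z - w‖ ^ 2 / (‖z - w‖ ^ 2 + 4 * (z.im * w.im)) := by
  rw [cayley, norm_div, div_pow, norm_sub_conj_sq]

lemma mapsTo_cayley (hw : 0 < w.im) : MapsTo (cayley w) upperHalfPlaneSet (ball 0 1) := by
  intro z (hz : 0 < z.im)
  have him : 0 < z.im * w.im := mul_pos hz hw
  rw [mem_ball_zero_iff, ← sq_lt_one_iff₀ (norm_nonneg _), norm_cayley_sq,
    div_lt_one (by positivity)]
  linarith

lemma differentiableOn_cayley (hw : 0 < w.im) :
    DifferentiableOn ℂ (cayley w) upperHalfPlaneSet :=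
  (differentiableOn_id.sub_const _).div (differentiableOn_id.sub_const _)
    fun _ hz ↦ sub_conj_ne_zero hz hw

lemma im_cayleyInv (w ζ : ℂ) : (cayleyInv w ζ).im = w.im * (1 - ‖ζ‖ ^ 2) / ‖1 - ζ‖ ^ 2 := by
  simp only [cayleyInv, div_im, ← sub_div, Complex.sq_norm]
  congr 1
  simp only [sub_im, mul_im, conj_re, conj_im, sub_re, one_re, mul_re, one_im, normSq_apply]
  ring

lemma mapsTo_cayleyInv (hw : 0 < w.im) : MapsTo (cayleyInv w) (ball 0 1) upperHalfPlaneSet := by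
  intro ζ hζ
  have hden : 0 < ‖1 - ζ‖ := norm_pos_iff.2 (one_sub_ne_zero_of_mem_ball hζ)
  have hnum : 0 < 1 - ‖ζ‖ ^ 2 :=
    sub_pos.2 ((sq_lt_one_iff₀ (norm_nonneg ζ)).2 (mem_ball_zero_iff.1 hζ))
  change 0 < (cayleyInv w ζ).im
  rw [im_cayleyInv]
  positivity

lemma differentiableOn_cayleyInv (w : ℂ) : DifferentiableOn ℂ (cayleyInv w) (ball 0 1) :=
  ((differentiableOn_id.const_mul _).const_sub _).div (differentiableOn_id.const_sub _)
    fun _ hζ ↦ one_sub_ne_zero_of_mem_ball hζ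

lemma cayleyInv_cayley (hz : 0 < z.im) (hw : 0 < w.im) : cayleyInv w (cayley w z) = z := by
  have hdisc := one_sub_ne_zero_of_mem_ball (mapsTo_cayley hw hz)
  have hplane := sub_conj_ne_zero hz hw
  rw [cayleyInv, div_eq_iff hdisc, cayley]
  field_simp
  ring

lemma norm_cayley_map_le (hF : DifferentiableOn ℂ F upperHalfPlaneSet)
    (hmaps : MapsTo F upperHalfPlaneSet upperHalfPlaneSet) (hz : 0 < z.im) (hw : 0 < w.im) :
    ‖cayley (F w) (F z)‖ ≤ ‖cayley w z‖ := by
  have hFw : 0 < (F w).im := hmaps hw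
  have hinv := mapsTo_cayleyInv hw
  have hdiff : DifferentiableOn ℂ (cayley (F w) ∘ F ∘ cayleyInv w) (ball 0 1) :=
    (differentiableOn_cayley hFw).comp (hF.comp (differentiableOn_cayleyInv w) hinv)
      (hmaps.comp hinv)
  have hball : MapsTo (cayley (F w) ∘ F ∘ cayleyInv w) (ball 0 1) (closedBall 0 1) :=
    ((mapsTo_cayley hFw).comp (hmaps.comp hinv)).mono_right ball_subset_closedBall
  simpa [cayleyInv_cayley hz hw] using
    norm_le_norm_of_mapsTo_ball hdiff hball (by simp) (mem_ball_zero_iff.1 (mapsTo_cayley hw hz))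

lemma schwarz_pick_of_mapsTo (hF : DifferentiableOn ℂ F upperHalfPlaneSet)
    (hmaps : MapsTo F upperHalfPlaneSet upperHalfPlaneSet) (hz : 0 < z.im) (hw : 0 < w.im) :
    ‖F z - F w‖ ^ 2 * (z.im * w.im) ≤ ‖z - w‖ ^ 2 * ((F z).im * (F w).im) := by
  have himF : 0 < (F z).im * (F w).im := mul_pos (hmaps hz) (hmaps hw)
  have hsq := pow_le_pow_left₀ (norm_nonneg _) (norm_cayley_map_le hF hmaps hz hw) 2
  rw [norm_cayley_sq, norm_cayley_sq, div_le_div_iff₀ (by positivity) (by positivity)] at hsq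
  linarith

-- `F + δ i` maps into the open half-plane for every `δ > 0`.
lemma schwarz_pick_of_im_nonneg (hF : DifferentiableOn ℂ F upperHalfPlaneSet)
    (hnonneg : ∀ z, 0 < z.im → 0 ≤ (F z).im) (hz : 0 < z.im) (hw : 0 < w.im) :
    ‖F z - F w‖ ^ 2 * (z.im * w.im) ≤ ‖z - w‖ ^ 2 * ((F z).im * (F w).im) := by
  have hperturbed : ∀ δ ∈ Ioi (0 : ℝ), ‖F z - F w‖ ^ 2 * (z.im * w.im) ≤
      ‖z - w‖ ^ 2 * (((F z).im + δ) * ((F w).im + δ)) := by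
    intro δ hδ
    have hmaps : MapsTo (fun z ↦ F z + δ * I) upperHalfPlaneSet upperHalfPlaneSet := fun z hz ↦ by
      simpa using add_pos_of_nonneg_of_pos (hnonneg z hz) hδ
    simpa using schwarz_pick_of_mapsTo (hF.add_const _) hmaps hz hw
  have hlim : ContinuousAt (fun δ : ℝ ↦ ‖z - w‖ ^ 2 * (((F z).im + δ) * ((F w).im + δ))) 0 := by
    fun_prop
  simpa using ge_of_tendsto (hlim.tendsto.mono_left nhdsWithin_le_nhds)
    (eventually_mem_nhdsWithin.mono hperturbed)

end SchwarzPick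

section Loewner

open Filter
open UpperHalfPlane (upperHalfPlaneSet)
open scoped Topology

variable {F : ℂ → ℂ} {d e : ℂ} {x c : ℝ}

lemma tendsto_im_div_of_hasDerivAt (hd : HasDerivAt F d x) (hx : (F x).im = 0) :
    Tendsto (fun ε : ℝ ↦ (F (x + ε * I)).im / ε) (𝓝[>] 0) (𝓝 d.re) := by
  have hline : HasDerivAt (fun ε : ℝ ↦ (x : ℂ) + ε * I) I 0 := by
    simpa using ((ofRealCLM.hasDerivAt (x := 0)).mul_const I).const_add (x : ℂ)
  have hcomp : HasDerivAt (fun ε : ℝ ↦ F (x + ε * I)) (d * I) 0 :=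
    HasDerivAt.comp (0 : ℝ) (by simpa using hd) hline
  have him : HasDerivAt (fun ε : ℝ ↦ (F (x + ε * I)).im) d.re 0 := by
    simpa [Function.comp_def] using imCLM.hasFDerivAt.comp_hasDerivAt (0 : ℝ) hcomp
  simpa [hx, div_eq_inv_mul] using him.tendsto_slope_zero_right

lemma tendsto_vertical_of_continuousAt (hF : ContinuousAt F x) :
    Tendsto (fun ε : ℝ ↦ F (x + ε * I)) (𝓝[>] 0) (𝓝 (F x)) := by
  have hline : ContinuousAt (fun ε : ℝ ↦ F (x + ε * I)) 0 :=
    ContinuousAt.comp (by simpa using hF) (by fun_prop)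
  simpa using hline.tendsto.mono_left nhdsWithin_le_nhds

lemma re_deriv_nonneg_of_im_nonneg (hnonneg : ∀ z, 0 < z.im → 0 ≤ (F z).im)
    (hd : HasDerivAt F d x) (hx : (F x).im = 0) : 0 ≤ d.re :=
  ge_of_tendsto (tendsto_im_div_of_hasDerivAt hd hx) <|
    eventually_mem_nhdsWithin.mono fun ε (hε : 0 < ε) ↦
      div_nonneg (hnonneg _ (by simpa using hε)) hε.le

lemma sq_sub_le_sq_sub_mul_deriv_mul_deriv (hF : DifferentiableOn ℂ F upperHalfPlaneSet)
    (hnonneg : ∀ z, 0 < z.im → 0 ≤ (F z).im) (hd : HasDerivAt F d x) (he : HasDerivAt F e c)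
    (hx : (F x).im = 0) (hc : (F c).im = 0) :
    ((F x).re - (F c).re) ^ 2 ≤ (x - c) ^ 2 * (d.re * e.re) := by
  have hleft := ((tendsto_vertical_of_continuousAt hd.continuousAt).sub
    (tendsto_vertical_of_continuousAt he.continuousAt)).norm.pow 2
  have hright := ((tendsto_im_div_of_hasDerivAt hd hx).mul
    (tendsto_im_div_of_hasDerivAt he hc)).const_mul ((x - c) ^ 2)
  have hreal : ‖F x - F c‖ ^ 2 = ((F x).re - (F c).re) ^ 2 := by
    simp [Complex.sq_norm, normSq_apply, hx, hc, ← sq]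
  rw [← hreal]
  refine le_of_tendsto_of_tendsto hleft hright ?_
  filter_upwards [self_mem_nhdsWithin] with ε (hε : 0 < ε)
  have hpick := schwarz_pick_of_im_nonneg (z := x + ε * I) (w := c + ε * I) hF hnonneg
    (by simpa using hε) (by simpa using hε)
  have hdist : ‖(x + ε * I : ℂ) - (c + ε * I)‖ ^ 2 = (x - c) ^ 2 := by
    simp [← ofReal_sub]
  rw [hdist] at hpick
  rw [div_mul_div_comm, ← mul_div_assoc, le_div_iff₀ (by positivity)]
  simpa using hpick

end Loewner

section DividedDifference

open Filter
open scoped Topology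

/-- The divided difference `φ[c, c, x]` of second order, where `s` stands for `φ'(c)`: the
leading coefficient of the quadratic interpolating `φ` at `c` to first order and at `x`. At `x = c`
it takes the junk value `0`. -/
def confluentDividedDiff (φ : ℝ → ℝ) (s c x : ℝ) : ℝ := (φ x - φ c - s * (x - c)) / (x - c) ^ 2

variable {φ φ' : ℝ → ℝ} {b c m s x M : ℝ}

lemma hasDerivAt_confluentDividedDiff (hφ : HasDerivAt φ m x) (hx : x ≠ c) :
    HasDerivAt (confluentDividedDiff φ s c)
      (((x - c) * (m + s) - 2 * (φ x - φ c)) / (x - c) ^ 3) x := by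
  have hne : x - c ≠ 0 := sub_ne_zero.2 hx
  have hsub : HasDerivAt (fun y ↦ y - c) 1 x := (hasDerivAt_id x).sub_const c
  have hquot := ((hφ.sub_const (φ c)).sub (hsub.const_mul s)).div (hsub.fun_pow 2)
    (pow_ne_zero 2 hne)
  refine hquot.congr_deriv ?_
  simp only [Pi.sub_apply]
  field_simp
  ring

lemma monotoneOn_confluentDividedDiff (hφ : ∀ x ∈ Ioo c b, HasDerivAt φ (φ' x) x)
    (htrapezoid : ∀ x ∈ Ioo c b, 2 * (φ x - φ c) ≤ (x - c) * (φ' x + s)) :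
    MonotoneOn (confluentDividedDiff φ s c) (Ioo c b) := by
  have hderiv := fun x (hx : x ∈ Ioo c b) ↦
    hasDerivAt_confluentDividedDiff (s := s) (hφ x hx) hx.1.ne'
  refine monotoneOn_of_hasDerivWithinAt_nonneg (convex_Ioo c b)
    (fun x hx ↦ (hderiv x hx).continuousAt.continuousWithinAt)
    (fun x hx ↦ (hderiv x (interior_subset hx)).hasDerivWithinAt) fun x hx ↦ ?_
  have hx : x ∈ Ioo c b := interior_subset hx
  exact div_nonneg (sub_nonneg.2 (htrapezoid x hx)) (pow_nonneg (sub_nonneg.2 hx.1.le) 3)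

lemma confluentDividedDiff_le_of_monotoneOn
    (hmono : MonotoneOn (confluentDividedDiff φ s c) (Ioo c b))
    (hM : ∀ x ∈ Ioo c b, φ x ≤ M) (hx : x ∈ Ioo c b) :
    confluentDividedDiff φ s c x ≤ (M - φ c - s * (b - c)) / (b - c) ^ 2 := by
  have hne : (b - c) ^ 2 ≠ 0 := pow_ne_zero 2 (sub_pos.2 (hx.1.trans hx.2)).ne'
  have hlim : ContinuousAt (fun y ↦ (M - φ c - s * (y - c)) / (y - c) ^ 2) b := by
    fun_prop (disch := exact hne)
  refine ge_of_tendsto (hlim.tendsto.mono_left (nhdsWithin_le_nhds (s := Iio b))) ?_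
  filter_upwards [Ioo_mem_nhdsLT hx.2] with y hy
  have hy' : y ∈ Ioo c b := ⟨hx.1.trans hy.1, hy.2⟩
  calc confluentDividedDiff φ s c x
    _ ≤ confluentDividedDiff φ s c y := hmono hx hy' hy.1.le
    _ ≤ (M - φ c - s * (y - c)) / (y - c) ^ 2 := by
      unfold confluentDividedDiff
      gcongr
      exact hM y hy'

lemma le_quadratic_of_confluentDividedDiff_le {q : ℝ} (hx : x ≠ c)
    (hq : confluentDividedDiff φ s c x ≤ q) : φ x ≤ φ c + s * (x - c) + q * (x - c) ^ 2 := by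
  rw [confluentDividedDiff, div_le_iff₀ (pow_two_pos_of_ne_zero (sub_ne_zero.2 hx))] at hq
  linarith

end DividedDifference

lemma isOpen_CSlit {J : Set ℝ} (hJ : IsOpen J) : IsOpen (CSlit J) :=
  (isOpen_ne_fun continuous_im continuous_const).union (hJ.preimage continuous_re)

/-- Pick (Nevanlinna–Herglotz) functions that are holomorphic across `J ⊆ ℝ` and real on `J`. No
condition is imposed on the values in the lower half-plane: for nonempty open `J` they are
determined by reflection. -/
structure IsPickOn (J : Set ℝ) (f : ℂ → ℂ) : Prop where
  differentiableOn : DifferentiableOn ℂ f (CSlit J)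
  im_nonneg : ∀ z : ℂ, 0 < z.im → 0 ≤ (f z).im
  im_ofReal : ∀ x ∈ J, (f x).im = 0

namespace IsPickOn

open UpperHalfPlane (upperHalfPlaneSet)

variable {J : Set ℝ} {f : ℂ → ℂ} {x c : ℝ}

lemma differentiableOn_upperHalfPlaneSet (hf : IsPickOn J f) :
    DifferentiableOn ℂ f upperHalfPlaneSet :=
  hf.differentiableOn.mono fun _ hz ↦ Or.inl (ne_of_gt hz)

lemma hasDerivAt (hf : IsPickOn J f) (hJ : IsOpen J) (hx : x ∈ J) :
    HasDerivAt f (deriv f x) x :=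
  (hf.differentiableOn.differentiableAt ((isOpen_CSlit hJ).mem_nhds (Or.inr hx))).hasDerivAt

lemma hasDerivAt_re (hf : IsPickOn J f) (hJ : IsOpen J) (hx : x ∈ J) :
    HasDerivAt (fun y : ℝ ↦ (f y).re) (deriv f x).re x :=
  (hf.hasDerivAt hJ hx).real_of_complex

lemma two_mul_sub_le_mul_add_deriv (hf : IsPickOn J f) (hJ : IsOpen J) (hc : c ∈ J) (hx : x ∈ J)
    (hcx : c ≤ x) :
    2 * ((f x).re - (f c).re) ≤ (x - c) * ((deriv f x).re + (deriv f c).re) := by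
  have hderiv_x := hf.hasDerivAt hJ hx
  have hderiv_c := hf.hasDerivAt hJ hc
  have hx_nonneg := re_deriv_nonneg_of_im_nonneg hf.im_nonneg hderiv_x (hf.im_ofReal x hx)
  have hc_nonneg := re_deriv_nonneg_of_im_nonneg hf.im_nonneg hderiv_c (hf.im_ofReal c hc)
  refine le_of_sq_le_sq ?_ (mul_nonneg (sub_nonneg.2 hcx) (add_nonneg hx_nonneg hc_nonneg))
  calc (2 * ((f x).re - (f c).re)) ^ 2
    _ = 4 * ((f x).re - (f c).re) ^ 2 := by ring
    _ ≤ 4 * ((x - c) ^ 2 * ((deriv f x).re * (deriv f c).re)) := by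
      gcongr
      exact sq_sub_le_sq_sub_mul_deriv_mul_deriv hf.differentiableOn_upperHalfPlaneSet hf.im_nonneg
        hderiv_x hderiv_c (hf.im_ofReal x hx) (hf.im_ofReal c hc)
    _ = (x - c) ^ 2 * (4 * (deriv f x).re * (deriv f c).re) := by ring
    _ ≤ (x - c) ^ 2 * ((deriv f x).re + (deriv f c).re) ^ 2 := by
      gcongr
      exact four_mul_le_sq_add _ _
    _ = ((x - c) * ((deriv f x).re + (deriv f c).re)) ^ 2 := (mul_pow _ _ 2).symm

end IsPickOn

lemma MemA1.isPickOn {c₁ c₂ c₃ c₄ : ℝ} {f : ℂ → ℂ} (hf : MemA1 c₁ c₂ c₃ c₄ f) :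
    IsPickOn (Ioo (-1) 1) f where
  differentiableOn := hf.holo
  im_nonneg z hz := hf.upper z (Or.inl hz.ne') hz
  im_ofReal x hx := by
    have hreal : f x = starRingEnd ℂ (f x) := by
      simpa only [conj_ofReal] using hf.symm x (Or.inr hx)
    exact conj_eq_iff_im.1 hreal.symm

theorem stmt14_general {J : Set ℝ} {f : ℂ → ℂ} {b c s M : ℝ} (hf : IsPickOn J f) (hJ : IsOpen J)
    (hcb : Ico c b ⊆ J) (hs : s = deriv (fun y : ℝ ↦ (f y).re) c)
    (hM : ∀ x ∈ Ioo c b, (f x).re ≤ M) :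
    ∀ x ∈ Ioo c b, (f x).re ≤ (f c).re + s * (x - c) +
      (M - (f c).re - s * (b - c)) * (x - c) ^ 2 / (b - c) ^ 2 := by
  intro x hx
  have hc : c ∈ J := hcb ⟨le_rfl, hx.1.trans hx.2⟩
  have hmem : ∀ y ∈ Ioo c b, y ∈ J := fun y hy ↦ hcb ⟨hy.1.le, hy.2⟩
  have hmono : MonotoneOn (confluentDividedDiff (fun y : ℝ ↦ (f y).re) s c) (Ioo c b) := by
    rw [hs, (hf.hasDerivAt_re hJ hc).deriv]
    exact monotoneOn_confluentDividedDiff (fun y hy ↦ hf.hasDerivAt_re hJ (hmem y hy))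
      fun y hy ↦ hf.two_mul_sub_le_mul_add_deriv hJ hc (hmem y hy) hy.1.le
  rw [mul_div_right_comm]
  exact le_quadratic_of_confluentDividedDiff_le (φ := fun y : ℝ ↦ (f y).re) hx.1.ne'
    (confluentDividedDiff_le_of_monotoneOn hmono hM hx)

theorem stmt14 (c₁ c₂ c₃ c₄ : ℝ)
    (h1 : -1 < c₁) (h12 : c₁ < c₂) (h2 : c₂ < 1)
    (h3 : -1 < c₃) (h34 : c₃ < c₄) (h4 : c₄ < 1)
    (f : ℂ → ℂ) (hf : MemA1 c₁ c₂ c₃ c₄ f)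
    (s M : ℝ)
    (hs : s = deriv (fun y : ℝ => (f y).re) c₂)
    (hM : ∀ x ∈ Set.Ioo (-1 : ℝ) 1, (f x).re ≤ M) :
    ∀ x ∈ Set.Ioo c₂ (1 : ℝ),
      (f x).re ≤ c₄ + s * (x - c₂) +
        (M - c₄ - s * (1 - c₂)) * (x - c₂) ^ 2 / (1 - c₂) ^ 2 := by
  simpa only [hf.val2, ofReal_re] using stmt14_general hf.isPickOn isOpen_Ioo
    (fun _ hx ↦ ⟨(h1.trans h12).trans_le hx.1, hx.2⟩) hs
    fun x hx ↦ hM x ⟨(h1.trans h12).trans hx.1, hx.2⟩
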